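/- The map λ ↦ wt(λ) is a bijection from the set of strict partitions all of whose parts are at most n onto the Weyl group orbit W·Λ₁. -/

import Mathlib

/-- The fundamental weight Λ₁ = (1/2, …, 1/2) of type Bₙ in ℚⁿ. -/
def LambdaOne (n : ℕ) : Fin n → ℚ := fun _ => 1 / 2

/-- The k-th simple root of type Bₙ (1-based index r): α₁ = e₁ and
αᵣ = eᵣ - e_{r-1} for r ≥ 2; expressed with 0-based coordinates. -/
def simpleRootB (n : ℕ) (r : ℕ) : Fin n → ℚ := fun i =>
  (if (i : ℕ) + 1 = r then 1 else 0) - (if (i : ℕ) + 2 = r then 1 else 0)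

/-- Negation of the coordinate `c`. -/
def negCoord {n : ℕ} (c : Fin n) : Equiv.Perm (Fin n → ℚ) :=
  Equiv.piCongrRight fun i => if i = c then Equiv.neg ℚ else Equiv.refl ℚ

/-- The simple reflection `s_k` of type Bₙ: `s₁` negates the first coordinate and,
for `k ≥ 2`, `s_k` exchanges the coordinates `k-1` and `k`. -/
def simpleReflB {n : ℕ} (c : Fin n) : Equiv.Perm (Fin n → ℚ) :=
  if (c : ℕ) = 0 then negCoord c
  else (Equiv.swap c ⟨(c : ℕ) - 1, Nat.lt_of_le_of_lt (Nat.sub_le _ _) c.isLt⟩).arrowCongr (Equiv.refl ℚ)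

/-- The Weyl group of type Bₙ, generated by the simple reflections. -/
def weylB (n : ℕ) : Subgroup (Equiv.Perm (Fin n → ℚ)) :=
  Subgroup.closure (Set.range (simpleReflB (n := n)))

/-- The shifted Young diagram of a strict partition, as a finset of (1-based)
boxes: the (1-based) row `i+1` consists of the boxes `(i+1, j)` for
`i + 1 ≤ j ≤ l[i] + i`. -/
def diagFinset (l : List ℕ) : Finset (ℕ × ℕ) :=
  (Finset.range l.length).biUnion fun i =>
    (Finset.Icc (i + 1) (l.getD i 0 + i)).image fun j => (i + 1, j)

/-- The residue `res(i,j) = j - i + 1` of a box. -/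
def resBox (b : ℕ × ℕ) : ℕ := b.2 + 1 - b.1

/-- wt(λ) = Λ₁ - Σ_{(i,j) ∈ λ} α_{res(i,j)}. -/
noncomputable def wtB (n : ℕ) (l : List ℕ) : Fin n → ℚ :=
  LambdaOne n - ∑ b ∈ diagFinset l, simpleRootB n (resBox b)

theorem row_sum_aux (n m i : ℕ) (k : Fin n) :
    ∑ j ∈ Finset.Icc (i + 1) (m + i), simpleRootB n (resBox (i + 1, j)) k =
      if (k : ℕ) + 1 = m then 1 else 0 := by
  induction m with
  | zero => simp
  | succ m ih =>
    rw [show m + 1 + i = (m + i) + 1 by omega, Finset.sum_Icc_succ_top (by omega), ih]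
    have : resBox (i + 1, m + i + 1) = m + 1 := by simp only [resBox]; omega
    rw [this]
    simp only [simpleRootB]
    split_ifs <;> first | omega | norm_num

theorem sum_getD_aux (l : List ℕ) (hl : l.Nodup) (x : ℕ) :
    ∑ i ∈ Finset.range l.length, (if x = l.getD i 0 then (1 : ℚ) else 0) =
      if x ∈ l then 1 else 0 := by
  induction l with
  | nil => simp
  | cons a l ih =>
    rw [List.nodup_cons] at hl
    rw [List.length_cons, Finset.sum_range_succ']
    simp only [List.getD_cons_succ, List.getD_cons_zero, ih hl.2, List.mem_cons]
    by_cases h : x = a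
    · subst h; simp [hl.1]
    · simp [h]

theorem wtB_apply_aux (n : ℕ) (l : List ℕ) (hl : l.Nodup) (k : Fin n) :
    wtB n l k = 1 / 2 - if (k : ℕ) + 1 ∈ l then 1 else 0 := by
  rw [← sum_getD_aux l hl]
  simp only [wtB, LambdaOne, diagFinset, Pi.sub_apply, Finset.sum_apply]
  rw [Finset.sum_biUnion]
  · congr 1
    apply Finset.sum_congr rfl
    intro i _
    rw [Finset.sum_image (by intro a _ b _ h; simpa using h), row_sum_aux]
  · intro a _ b _ hab
    simp only [Function.onFun]
    rw [Finset.disjoint_left]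
    intro p hp hq
    simp only [Finset.mem_image] at hp hq
    obtain ⟨_, _, rfl⟩ := hp
    obtain ⟨_, _, h⟩ := hq
    simp only [Prod.mk.injEq] at h
    omega

theorem negCoord_apply_aux {n : ℕ} (c : Fin n) (v : Fin n → ℚ) (i : Fin n) :
    negCoord c v i = if i = c then - v i else v i := by
  simp only [negCoord, Equiv.piCongrRight_apply, Pi.map_apply]
  split_ifs <;> simp

theorem negCoord_mem_aux {n : ℕ} (m : ℕ) (hm : m < n) : negCoord (⟨m, hm⟩ : Fin n) ∈ weylB n := by
  induction m with
  | zero =>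
    apply Subgroup.subset_closure
    exact ⟨⟨0, hm⟩, by simp [simpleReflB]⟩
  | succ m ih =>
    have h1 := ih (by omega)
    have h2 : simpleReflB (⟨m + 1, hm⟩ : Fin n) ∈ weylB n :=
      Subgroup.subset_closure ⟨_, rfl⟩
    have : negCoord (⟨m + 1, hm⟩ : Fin n) =
        simpleReflB ⟨m + 1, hm⟩ * negCoord ⟨m, by omega⟩ * simpleReflB ⟨m + 1, hm⟩ := by
      ext v i
      simp only [simpleReflB, Equiv.Perm.mul_apply, negCoord_apply_aux, Nat.succ_ne_zero, if_false,
        Equiv.arrowCongr_apply, Function.comp, Equiv.refl_apply, Equiv.symm_swap,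
        Nat.add_sub_cancel, Equiv.swap_apply_self]
      have : (Equiv.swap (⟨m + 1, hm⟩ : Fin n) ⟨m, by omega⟩ i = ⟨m, by omega⟩) ↔
          i = ⟨m + 1, hm⟩ := by
        rw [Equiv.swap_apply_eq_iff, Equiv.swap_apply_right]
      simp only [this]
    rw [this]
    exact mul_mem (mul_mem h2 h1) h2

theorem orbit_aux {n : ℕ} (S : Finset (Fin n)) :
    ∃ w ∈ weylB n, w (LambdaOne n) = fun i => 1 / 2 - if i ∈ S then 1 else 0 := by
  induction S using Finset.induction_on with
  | empty => exact ⟨1, one_mem _, by funext i; simp [LambdaOne]⟩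
  | insert a S ha ih =>
    obtain ⟨w, hw, h⟩ := ih
    refine ⟨negCoord a * w, mul_mem (negCoord_mem_aux a.1 a.2) hw, ?_⟩
    funext i
    rw [Equiv.Perm.mul_apply, h, negCoord_apply_aux]
    by_cases hi : i = a
    · subst hi; simp [ha]; norm_num
    · simp [hi]

theorem pm_of_weyl_aux {n : ℕ} (w : Equiv.Perm (Fin n → ℚ)) (hw : w ∈ weylB n) :
    ∀ v : Fin n → ℚ, (∀ i, v i = 1 / 2 ∨ v i = - (1 / 2)) ↔
      (∀ i, w v i = 1 / 2 ∨ w v i = - (1 / 2)) := by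
  induction hw using Subgroup.closure_induction with
  | mem x hx =>
    obtain ⟨c, rfl⟩ := hx
    intro v
    by_cases hc : (c : ℕ) = 0
    · simp only [simpleReflB, if_pos hc, negCoord_apply_aux]
      refine forall_congr' fun i => ?_
      split_ifs
      · rw [neg_inj, neg_eq_iff_eq_neg, or_comm]
      · rfl
    · simp only [simpleReflB, if_neg hc, Equiv.arrowCongr_apply, Function.comp, Equiv.refl_apply]
      exact (Equiv.forall_congr_left (Equiv.swap c ⟨(c : ℕ) - 1, _⟩))
  | one => intro v; rfl
  | mul x y _ _ hx hy => intro v; rw [hy v, hx (y v)]; rfl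
  | inv x _ hx =>
    intro v
    rw [hx (x⁻¹ v)]
    simp

theorem wtB_bijective_onto_orbit (n : ℕ) :
    Set.BijOn (wtB n)
      {l : List ℕ | l.Chain' (· > ·) ∧ ∀ x ∈ l, 0 < x ∧ x ≤ n}
      {v | ∃ w ∈ weylB n, w (LambdaOne n) = v} := by
  have nd : ∀ l : List ℕ, l.Chain' (· > ·) → l.Pairwise (· > ·) := fun l h =>
    List.isChain_iff_pairwise.mp h
  have nd2 : ∀ l : List ℕ, l.Pairwise (· > ·) → l.Nodup := fun l h =>
    h.imp (fun h => Nat.ne_of_gt h)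
  refine ⟨?_, ?_, ?_⟩
  · rintro l ⟨hl, -⟩
    obtain ⟨w, hw, h⟩ := orbit_aux (Finset.univ.filter fun i : Fin n => (i : ℕ) + 1 ∈ l)
    refine ⟨w, hw, h.trans ?_⟩
    funext i
    rw [wtB_apply_aux n l (nd2 l (nd l hl))]
    simp
  · rintro l ⟨hl, hl'⟩ m ⟨hm, hm'⟩ h
    have key : ∀ i : Fin n, (i : ℕ) + 1 ∈ l ↔ (i : ℕ) + 1 ∈ m := by
      intro i
      have := congrFun h i
      rw [wtB_apply_aux n l (nd2 l (nd l hl)), wtB_apply_aux n m (nd2 m (nd m hm))] at this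
      by_cases h1 : (i : ℕ) + 1 ∈ l <;> by_cases h2 : (i : ℕ) + 1 ∈ m <;>
        simp only [h1, h2, if_true, if_false] at this ⊢ <;> norm_num at this
    have key2 : ∀ x, x ∈ l ↔ x ∈ m := by
      intro x
      by_cases hx : 0 < x ∧ x ≤ n
      · have := key ⟨x - 1, by omega⟩
        simpa [Nat.sub_add_cancel hx.1] using this
      · exact ⟨fun h => absurd (hl' x h) hx, fun h => absurd (hm' x h) hx⟩
    have hp : l.Perm m :=
      (List.perm_ext_iff_of_nodup (nd2 l (nd l hl)) (nd2 m (nd m hm))).2 key2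
    exact hp.eq_of_pairwise (fun a b _ _ h1 h2 => absurd h1 (Nat.lt_asymm h2)) (nd l hl) (nd m hm)
  · rintro v ⟨w, hw, rfl⟩
    have hv := (pm_of_weyl_aux w hw (LambdaOne n)).1 (fun i => Or.inl rfl)
    set v := w (LambdaOne n)
    let S : Finset ℕ := (Finset.univ.filter fun i : Fin n => v i = -(1 / 2)).image
      fun i : Fin n => (i : ℕ) + 1
    have hs : (S.sort (· ≥ ·)).Pairwise (· > ·) := (Finset.sortedGT_sort S).pairwise
    refine ⟨S.sort (· ≥ ·), ⟨List.isChain_iff_pairwise.mpr hs, ?_⟩, ?_⟩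
    · intro x hx
      simp only [Finset.mem_sort, S, Finset.mem_image] at hx
      obtain ⟨i, _, rfl⟩ := hx
      exact ⟨by omega, i.2⟩
    · funext i
      rw [wtB_apply_aux n _ (nd2 _ hs)]
      have : (i : ℕ) + 1 ∈ S.sort (· ≥ ·) ↔ v i = -(1 / 2) := by
        simp [S, Fin.val_inj]
      simp only [this]
      rcases hv i with h | h <;> rw [h] <;> norm_num
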